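/- Let n, m, p be positive integers, A ∈ ℤ^{p×(nm)}, b ∈ ℤ^p, u_{ij} ≥ 0, and let X = {z ∈ {0,1}^{n×m} : A z ≤ b} with T_i(z) = Σ_{j=1}^m u_{ij} z_{ij}. Let w_1 > w_2 > … > w_n > 0 and define y*_{ik} = w'_k if i ≥ n+1−k and y*_{ik} = 0 otherwise (so that Σ_{k=1}^n y*_{ik} = w_{n+1−i} for each i). Suppose z* ∈ X maximizes the linear objective Σ_{i=1}^n (Σ_{k=1}^n y*_{ik}) T_i(z) = Σ_{i=1}^n w_{n+1−i} T_i(z) over all z ∈ X, and suppose T_1(z*) ≥ T_2(z*) ≥ … ≥ T_n(z*). Then z* maximizes the generalized Gini index G_w(T_1(z),…,T_n(z)) over all z ∈ X. -/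

import Mathlib

/-- The vector `v` rearranged in nondecreasing order. -/
noncomputable def sortedVec {n : ℕ} (v : Fin n → ℝ) : Fin n → ℝ := v ∘ Tuple.sort v

/-- Ordered weighted average: `OWA_w(v) = ∑ₖ w_k v↑_k`. -/
noncomputable def OWA {n : ℕ} (w v : Fin n → ℝ) : ℝ := ∑ k, w k * sortedVec v k

/-- `Lorenz v k` is the k-th Lorenz component, the sum of the k smallest components of v. -/
noncomputable def Lorenz {n : ℕ} (v : Fin n → ℝ) (k : ℕ) : ℝ :=
  ∑ i : Fin n, if (i : ℕ) < k then sortedVec v i else 0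

/-- `wprime w k = w_k - w_{k+1}` with the convention `w_{n+1} = 0` (0-indexed). -/
noncomputable def wprime {n : ℕ} (w : Fin n → ℝ) (k : Fin n) : ℝ :=
  w k - (if h : (k : ℕ) + 1 < n then w ⟨(k : ℕ) + 1, h⟩ else 0)

/-- Feasible set `X = {z ∈ {0,1}^{n×m} : A z ≤ b}`. -/
def Feasible {n m p : ℕ} (A : Matrix (Fin p) (Fin n × Fin m) ℤ) (b : Fin p → ℤ)
    (z : Fin n × Fin m → ℝ) : Prop :=
  (∀ ij, z ij = 0 ∨ z ij = 1) ∧ ∀ q, ∑ ij, (A q ij : ℝ) * z ij ≤ (b q : ℝ)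

/-- `Util u z i = T_i(z) = ∑ⱼ u_{ij} z_{ij}`. -/
def Util {n m : ℕ} (u : Fin n → Fin m → ℝ) (z : Fin n × Fin m → ℝ) (i : Fin n) : ℝ :=
  ∑ j, u i j * z (i, j)

/-!
By the rearrangement inequality, for nonincreasing weights `w` the OWA `∑ₖ w_k v↑_k` is the minimum
over all permutations `σ` of the linear forms `∑ᵢ w_{σ i} v_i`, and for a nonincreasing `v` the
order-reversing permutation attains it. The row sums of `y*` telescope to exactly those reversed
weights. Hence the linear objective dominates the OWA on all of `X` and agrees with it at `z*`, so a
maximizer `z*` of the former is also a maximizer of the latter.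
-/

theorem sum_Ici_wprime {n : ℕ} (w : Fin n → ℝ) (j : Fin n) :
    ∑ k ∈ Finset.Ici j, wprime w k = w j := by
  cases n with
  | zero => exact j.elim0
  | succ n =>
    induction j using Fin.reverseInduction with
    | last =>
      have Ici_last : Finset.Ici (Fin.last n) = {Fin.last n} := Finset.Ici_top
      simp [Ici_last, wprime]
    | cast j ih =>
      have Ioi_castSucc : Finset.Ioi j.castSucc = Finset.Ici j.succ := by
        ext k
        simp [Fin.castSucc_lt_iff_succ_le]
      have wprime_castSucc : wprime w j.castSucc = w j.castSucc - w j.succ := by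
        simp [wprime, Fin.succ]
      rw [← Finset.add_sum_Ioi_eq_sum_Ici, Ioi_castSucc, ih, wprime_castSucc, sub_add_cancel]

theorem sum_ite_wprime_eq_rev {n : ℕ} (w : Fin n → ℝ) (i : Fin n) :
    ∑ k : Fin n, (if n ≤ (i : ℕ) + k + 1 then wprime w k else 0) = w i.rev := by
  have filter_eq_Ici :
      Finset.univ.filter (fun k : Fin n => n ≤ (i : ℕ) + k + 1) = Finset.Ici i.rev := by
    ext k
    simp only [Finset.mem_filter_univ, Finset.mem_Ici, Fin.le_def, Fin.val_rev]
    omega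
  rw [← Finset.sum_filter, filter_eq_Ici, sum_Ici_wprime]

theorem OWA_le_sum_comp_perm_mul {n : ℕ} {w : Fin n → ℝ} (hw : Antitone w) (v : Fin n → ℝ)
    (σ : Equiv.Perm (Fin n)) : OWA w v ≤ ∑ i, w (σ i) * v i := by
  have hv : Monotone (sortedVec v) := Tuple.monotone_sort v
  calc OWA w v
      ≤ ∑ k, w (((Tuple.sort v).trans σ) k) * sortedVec v k :=
        (hw.antivary hv).sum_mul_le_sum_comp_perm_mul
    _ = ∑ i, w (σ i) * v i := Equiv.sum_comp (Tuple.sort v) fun i => w (σ i) * v i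

theorem sortedVec_eq_comp_rev_of_antitone {n : ℕ} {v : Fin n → ℝ} (hv : Antitone v) :
    sortedVec v = v ∘ Fin.rev :=
  (Tuple.comp_sort_eq_comp_iff_monotone (σ := Fin.revPerm).2 (hv.comp Fin.rev_anti)).symm

theorem OWA_eq_sum_rev_mul_of_antitone {n : ℕ} (w : Fin n → ℝ) {v : Fin n → ℝ}
    (hv : Antitone v) : OWA w v = ∑ i, w i.rev * v i := by
  rw [OWA, sortedVec_eq_comp_rev_of_antitone hv, ← Equiv.sum_comp Fin.revPerm]
  simp only [Function.comp_apply, Fin.revPerm_apply, Fin.rev_rev]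

theorem stmt0_general {α : Type*} {n : ℕ} {X : Set α} {T : α → Fin n → ℝ} {w : Fin n → ℝ}
    (hw : Antitone w) {ystar : Fin n → Fin n → ℝ}
    (hy : ∀ i k : Fin n, ystar i k = if n ≤ (i : ℕ) + (k : ℕ) + 1 then wprime w k else 0)
    {zstar : α} (hmax : IsMaxOn (fun z => ∑ i, (∑ k, ystar i k) * T z i) X zstar)
    (hsorted : Antitone (T zstar)) :
    IsMaxOn (fun z => OWA w (T z)) X zstar := by
  have row_sum (i : Fin n) : ∑ k, ystar i k = w i.rev := by
    simp only [hy, sum_ite_wprime_eq_rev]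
  simp only [row_sum] at hmax
  refine isMaxOn_iff.2 fun z hz => ?_
  calc OWA w (T z)
      ≤ ∑ i, w i.rev * T z i := OWA_le_sum_comp_perm_mul hw (T z) Fin.revPerm
    _ ≤ ∑ i, w i.rev * T zstar i := isMaxOn_iff.1 hmax z hz
    _ = OWA w (T zstar) := (OWA_eq_sum_rev_mul_of_antitone w hsorted).symm

/-- Theorem 1, optimality condition: if `z*` maximizes the linear
objective `∑ᵢ (∑ₖ y*_{ik}) T_i(z)` over `X`, where `y*_{ik} = w'_k` for `i ≥ n+1-k`
(1-indexed) and `0` otherwise, and `T_1(z*) ≥ … ≥ T_n(z*)`, then `z*` maximizes the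
generalized Gini index `G_w(T_1(z),…,T_n(z))` over `X`. -/
theorem stmt0 {n m p : ℕ} (hn : 0 < n) (hm : 0 < m) (hp : 0 < p)
    (A : Matrix (Fin p) (Fin n × Fin m) ℤ) (b : Fin p → ℤ)
    (u : Fin n → Fin m → ℝ) (hu : ∀ i j, 0 ≤ u i j)
    (w : Fin n → ℝ) (hw : StrictAnti w) (hwpos : ∀ k, 0 < w k)
    (ystar : Fin n → Fin n → ℝ)
    (hy : ∀ i k : Fin n, ystar i k = if n ≤ (i : ℕ) + (k : ℕ) + 1 then wprime w k else 0)
    (zstar : Fin n × Fin m → ℝ) (hzstar : Feasible A b zstar)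
    (hmax : ∀ z, Feasible A b z →
      ∑ i, (∑ k, ystar i k) * Util u z i ≤ ∑ i, (∑ k, ystar i k) * Util u zstar i)
    (hsorted : ∀ i j : Fin n, i ≤ j → Util u zstar j ≤ Util u zstar i) :
    ∀ z, Feasible A b z → OWA w (Util u z) ≤ OWA w (Util u zstar) :=
  isMaxOn_iff.1 <| stmt0_general (X := {z | Feasible A b z}) hw.antitone hy
    (isMaxOn_iff.2 hmax) hsorted
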